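/- Fix x ∈ M, let α, β be closed smooth 1-forms on M, and suppose X_α, X_β are smooth vector fields defined near x satisfying: (1) X_α(x) = α♯(x) and X_β(x) = β♯(x); (2) (so that D_x(α♯ − X_α) and D_x(β♯ − X_β) are well-defined elements of Hom(T_xM, T_xM), with D_x(α♯ − X_α).Y_x = [Y, α♯ − X_α](x) for any vector field Y); (3) L_{X_α}α = L_{X_α}β = L_{X_β}α = L_{X_β}β = 0; and (4) [X_α, X_β] = 0. Define the force F(α,β) := (1/2) d(g⁻¹(α,β)) and the stress D(α,β)(x) := D_x(β♯ − X_β).α♯(x). Then g(R(α♯,β♯)β♯,α♯)(x) = R₁₁ + R₁₂ + R₂ + R₃, where R₁₁ = (1/2)( L_{X_α}² (g⁻¹)(β,β) − 2 L_{X_α}L_{X_β}(g⁻¹)(α,β) + L_{X_β}²(g⁻¹)(α,α) )(x), R₁₂ = ⟨F(α,α), D(β,β)⟩ + ⟨F(β,β), D(α,α)⟩ − ⟨F(α,β), D(α,β) + D(β,α)⟩, R₂ = ( ‖F(α,β)‖²_{g⁻¹} − ⟨F(α,α), F(β,β)⟩_{g⁻¹} )(x), and R₃ = −(3/4) ‖D(α,β)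 − D(β,α)‖²_{g_x}. -/

import Mathlib

/-!
Local-coordinate (chart) model of a Riemannian manifold: points are elements
of `ℝⁿ`, vector fields and 1-forms are given by their component functions on
an open set `U`, and the metric by its matrix of components.
-/

noncomputable section

namespace RG

/-- Points of the chart. -/
abbrev Pt (n : ℕ) : Type := Fin n → ℝ
/-- Vector fields, by components. -/
abbrev VF (n : ℕ) : Type := Pt n → Fin n → ℝ
/-- 1-forms, by components. -/
abbrev OneForm (n : ℕ) : Type := Pt n → Fin n → ℝ
/-- Metric tensors, by components. -/
abbrev Met (n : ℕ) : Type := Pt n → Matrix (Fin n) (Fin n) ℝ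

variable {n : ℕ}

/-- Partial derivative `∂ₛ f`. -/
def pd (s : Fin n) (f : Pt n → ℝ) : Pt n → ℝ := fun x => fderiv ℝ f x (Pi.single s 1)

/-- Directional derivative `X f` of a function along a vector field. -/
def dder (X : VF n) (f : Pt n → ℝ) : Pt n → ℝ := fun x => fderiv ℝ f x (X x)

/-- Lie bracket `[X, Y]` of vector fields. -/
def bracket (X Y : VF n) : VF n :=
  fun x k => fderiv ℝ (fun y => Y y k) x (X x) - fderiv ℝ (fun y => X y k) x (Y x)

/-- The inverse (co-)metric `g⁻¹`. -/
def ginv (g : Met n) : Met n := fun x => (g x)⁻¹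

/-- Pairing `α(X)` of a 1-form with a vector field. -/
def pairF (α : OneForm n) (X : VF n) : Pt n → ℝ := fun x => ∑ i, α x i * X x i

/-- Metric inner product `g(X,Y)` of vector fields. -/
def gV (g : Met n) (X Y : VF n) : Pt n → ℝ := fun x => ∑ i, ∑ j, g x i j * X x i * Y x j

/-- Co-metric inner product `g⁻¹(α,β)` of 1-forms. -/
def gF (g : Met n) (α β : OneForm n) : Pt n → ℝ :=
  fun x => ∑ i, ∑ j, ginv g x i j * α x i * β x j

/-- Raising indices: `α♯ = g⁻¹ α`. -/
def sharp (g : Met n) (α : OneForm n) : VF n := fun x k => ∑ i, ginv g x i k * α x i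

/-- Lowering indices: `X♭ = g X`. -/
def flat (g : Met n) (X : VF n) : OneForm n := fun x k => ∑ i, g x i k * X x i

/-- Differential `df` of a function, as a 1-form. -/
def dF (f : Pt n → ℝ) : OneForm n := fun x i => pd i f x

/-- Exterior derivative of a 1-form, evaluated on two vector fields:
`dα(X,Y) = Σ (∂ᵢα_j − ∂_jαᵢ) Xⁱ Y^j`. -/
def dOne (α : OneForm n) (X Y : VF n) : Pt n → ℝ :=
  fun x => ∑ i, ∑ j, (pd i (fun y => α y j) x - pd j (fun y => α y i) x) * X x i * Y x j

/-- Christoffel symbols `Γ^k_{ij}` of the Levi-Civita connection. -/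
def chr (g : Met n) (k i j : Fin n) : Pt n → ℝ :=
  fun x => (1/2) * ∑ l, ginv g x k l *
    (pd i (fun y => g y j l) x + pd j (fun y => g y i l) x - pd l (fun y => g y i j) x)

/-- Levi-Civita covariant derivative `∇_X Y` of a vector field. -/
def covV (g : Met n) (X Y : VF n) : VF n :=
  fun x k => fderiv ℝ (fun y => Y y k) x (X x) + ∑ i, ∑ j, chr g k i j x * X x i * Y x j

/-- Levi-Civita covariant derivative `∇_X α` of a 1-form, characterized by
`(∇_X α)(Y) = X(α(Y)) − α(∇_X Y)`. -/
def covF (g : Met n) (X : VF n) (α : OneForm n) : OneForm n :=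
  fun x j => fderiv ℝ (fun y => α y j) x (X x) - ∑ i, ∑ k, X x i * chr g k i j x * α x k

/-- Riemann curvature tensor `R(X,Y)Z = ∇_X∇_Y Z − ∇_Y∇_X Z − ∇_{[X,Y]}Z`. -/
def Rcurv (g : Met n) (X Y Z : VF n) : VF n :=
  covV g X (covV g Y Z) - covV g Y (covV g X Z) - covV g (bracket X Y) Z

/-- Lie derivative of a 1-form along a vector field. -/
def lieF (X : VF n) (α : OneForm n) : OneForm n :=
  fun x i => fderiv ℝ (fun y => α y i) x (X x) + ∑ s, α x s * pd i (fun y => X y s) x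

/-- Lie derivative of a contravariant 2-tensor (such as the co-metric `g⁻¹`). -/
def lieCo (X : VF n) (G : Met n) : Met n :=
  fun x => Matrix.of fun i j =>
    fderiv ℝ (fun y => G y i j) x (X x)
      - ∑ s, G x s j * pd s (fun y => X y i) x
      - ∑ s, G x i s * pd s (fun y => X y j) x

/-- Evaluation of a contravariant 2-tensor on a pair of 1-forms. -/
def evCo (G : Met n) (α β : OneForm n) : Pt n → ℝ :=
  fun x => ∑ i, ∑ j, G x i j * α x i * β x j

/-- Smoothness of (the components of) a 1-form or vector field on `U`. -/
def SmoothSec (U : Set (Pt n)) (ω : Pt n → Fin n → ℝ) : Prop :=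
  ∀ i, ContDiffOn ℝ (⊤ : ℕ∞) (fun y => ω y i) U

/-- Smoothness of the metric components on `U`. -/
def SmoothMet (U : Set (Pt n)) (g : Met n) : Prop :=
  ∀ i j, ContDiffOn ℝ (⊤ : ℕ∞) (fun y => g y i j) U

/-- `g` is a smooth Riemannian metric on `U`. -/
def IsRiemannOn (U : Set (Pt n)) (g : Met n) : Prop :=
  SmoothMet U g ∧ ∀ x ∈ U, (g x).IsSymm ∧ (g x).PosDef

/-- A 1-form is closed on `U`. -/
def IsClosedOn (U : Set (Pt n)) (α : OneForm n) : Prop :=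
  ∀ x ∈ U, ∀ i j, pd i (fun y => α y j) x = pd j (fun y => α y i) x

end RG

open RG

namespace RG

variable {n : ℕ}

/-- The *force*: `F(α,β) := (1/2) d(g⁻¹(α,β))`, a 1-form. -/
def force (g : Met n) (α β : OneForm n) : OneForm n :=
  fun x i => (1/2) * dF (gF g α β) x i

/-- The *stress*: `D(α,β)(x) := D_x(β♯ − X_β).α♯(x)`, a tangent vector at `x`,
where `Xb` plays the role of `X_β` (a locally constant extension of `β♯(x)`),
so that `β♯ − X_β` vanishes at `x` and its derivative `D_x` there is
chart-independent; in the chart it is the ordinary derivative `fderiv`. -/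
def stress (g : Met n) (α β : OneForm n) (Xb : VF n) (x : Pt n) : Fin n → ℝ :=
  fderiv ℝ (fun y => (sharp g β y - Xb y : Fin n → ℝ)) x (sharp g α x)

end RG

/-!
Write `A = α♯`, `B = β♯`. Since `α` and `β` are closed, `∇A` and `∇B` are self-adjoint, so that
`grad ⟨A, B⟩ = ∇_A B + ∇_B A`. Moving the outer covariant derivatives of `⟨R(A, B)B, A⟩` off `∇B`
then yields `½ (A A ⟨B, B⟩ - A B ⟨A, B⟩ - B A ⟨A, B⟩ + B B ⟨A, A⟩)` plus quadratic terms in `∇A`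
and `∇B`, which regroup into `‖F(α, β)‖² - ⟨F(α, α), F(β, β)⟩ - ¾ ‖[A, B]‖²`.

As `X_α`, `X_β` annihilate `α` and `β`, the Lie derivatives of the co-metric are the same iterated
derivatives taken along `X_α`, `X_β`. These fields agree with `A`, `B` at `x`, so replacing
`X_α X_α f` by `A A f` costs `df(D_x(A - X_α).A)`, a force paired with a stress; and
`[X_α, X_β] = 0` turns `D(α, β) - D(β, α)` into `[A, B]`.
-/

namespace RG

open Matrix Set
open scoped ContDiff

variable {n : ℕ} {U : Set (Pt n)} {x y : Pt n}

/-! ### Forms and metrics as matrix products -/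

theorem sum_sum_mul_mul_eq_dotProduct_mulVec (M : Matrix (Fin n) (Fin n) ℝ) (u v : Fin n → ℝ) :
    ∑ i, ∑ j, M i j * u i * v j = u ⬝ᵥ M *ᵥ v := by
  simp only [dotProduct, mulVec, Finset.mul_sum]
  exact Finset.sum_congr rfl fun i _ => Finset.sum_congr rfl fun j _ => by ring

theorem evCo_apply (G : Met n) (α β : OneForm n) (y : Pt n) :
    evCo G α β y = α y ⬝ᵥ G y *ᵥ β y :=
  sum_sum_mul_mul_eq_dotProduct_mulVec _ _ _

theorem gV_apply (g : Met n) (X Y : VF n) (y : Pt n) : gV g X Y y = X y ⬝ᵥ g y *ᵥ Y y :=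
  sum_sum_mul_mul_eq_dotProduct_mulVec _ _ _

theorem sharp_apply (g : Met n) (α : OneForm n) (y : Pt n) : sharp g α y = α y ᵥ* ginv g y := by
  funext k
  exact Finset.sum_congr rfl fun i _ => mul_comm _ _

theorem gF_apply_eq_sharp_dotProduct (g : Met n) (α β : OneForm n) (y : Pt n) :
    gF g α β y = sharp g α y ⬝ᵥ β y := by
  rw [sharp_apply, ← dotProduct_mulVec]
  exact evCo_apply _ _ _ _

theorem sharp_vecMul {g : Met n} (hdet : IsUnit (g y).det) (α : OneForm n) :
    sharp g α y ᵥ* g y = α y := by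
  rw [sharp_apply, ginv, vecMul_vecMul, nonsing_inv_mul _ hdet, vecMul_one]

theorem gV_sharp_left {g : Met n} (hdet : IsUnit (g y).det) (α : OneForm n) (Y : VF n) :
    gV g (sharp g α) Y y = α y ⬝ᵥ Y y := by
  rw [gV_apply, dotProduct_mulVec, sharp_vecMul hdet]

theorem sharp_eq_of_forall_dotProduct_eq {g : Met n} (hdet : IsUnit (g y).det) {θ : OneForm n}
    {w : Pt n} (h : ∀ v, θ y ⬝ᵥ v = w ⬝ᵥ g y *ᵥ v) : sharp g θ y = w := by
  have hθ : θ y = w ᵥ* g y := dotProduct_eq _ _ fun v => by rw [h, dotProduct_mulVec]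
  rw [sharp_apply, hθ, ginv, vecMul_vecMul, mul_nonsing_inv _ hdet, vecMul_one]

/-! ### Smoothness -/

theorem differentiableAt_of_contDiffOn (hU : IsOpen U) {f : Pt n → ℝ} (hf : ContDiffOn ℝ ∞ f U)
    (hy : y ∈ U) : DifferentiableAt ℝ f y :=
  (hf.contDiffAt (hU.mem_nhds hy)).differentiableAt (by simp)

theorem SmoothSec.differentiableAt (hU : IsOpen U) {X : VF n} (hX : SmoothSec U X) (hy : y ∈ U) :
    DifferentiableAt ℝ X y :=
  differentiableAt_pi.2 fun i => differentiableAt_of_contDiffOn hU (hX i) hy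

theorem SmoothMet.differentiableAt (hU : IsOpen U) {G : Met n} (hG : SmoothMet U G) (hy : y ∈ U)
    (i j : Fin n) : DifferentiableAt ℝ (fun z => G z i j) y :=
  differentiableAt_of_contDiffOn hU (hG i j) hy

theorem contDiffOn_fderiv (hU : IsOpen U) {f : Pt n → ℝ} (hf : ContDiffOn ℝ ∞ f U) :
    ContDiffOn ℝ ∞ (fderiv ℝ f) U :=
  hf.fderiv_of_isOpen hU (by simp)

theorem contDiffOn_dder (hU : IsOpen U) {X : VF n} {f : Pt n → ℝ} (hX : SmoothSec U X)
    (hf : ContDiffOn ℝ ∞ f U) : ContDiffOn ℝ ∞ (dder X f) U :=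
  (contDiffOn_fderiv hU hf).clm_apply (contDiffOn_pi.2 hX)

theorem contDiffOn_pd (hU : IsOpen U) {f : Pt n → ℝ} (s : Fin n) (hf : ContDiffOn ℝ ∞ f U) :
    ContDiffOn ℝ ∞ (pd s f) U :=
  (contDiffOn_fderiv hU hf).clm_apply contDiffOn_const

theorem contDiffOn_det {G : Met n} (hG : SmoothMet U G) :
    ContDiffOn ℝ ∞ (fun y => (G y).det) U := by
  simp only [det_apply]
  exact ContDiffOn.sum fun σ _ => (contDiffOn_prod fun i _ => hG _ _).const_smul _

theorem smoothMet_ginv {g : Met n} (hg : SmoothMet U g) (hdet : ∀ y ∈ U, IsUnit (g y).det) :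
    SmoothMet U (ginv g) := by
  intro i j
  have cramer : (fun y => ginv g y i j) =
      fun y => (g y).det⁻¹ * ((g y).updateRow j (Pi.single i 1)).det := by
    funext y
    simp [ginv, inv_def, Ring.inverse_eq_inv', adjugate_apply]
  rw [cramer]
  refine ((contDiffOn_det hg).inv fun y hy => (hdet y hy).ne_zero).mul (contDiffOn_det ?_)
  intro a b
  rcases eq_or_ne a j with rfl | haj
  · simpa only [updateRow_self] using contDiffOn_const
  · simpa only [updateRow_ne haj] using hg a b

theorem smoothSec_sharp {g : Met n} (hG : SmoothMet U (ginv g)) {α : OneForm n}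
    (hα : SmoothSec U α) : SmoothSec U (sharp g α) :=
  fun k => ContDiffOn.sum fun i _ => (hG i k).mul (hα i)

theorem contDiffOn_evCo {G : Met n} (hG : SmoothMet U G) {α β : OneForm n}
    (hα : SmoothSec U α) (hβ : SmoothSec U β) : ContDiffOn ℝ ∞ (evCo G α β) U :=
  ContDiffOn.sum fun i _ => ContDiffOn.sum fun j _ => ((hG i j).mul (hα i)).mul (hβ j)

theorem contDiffOn_gV {g : Met n} (hg : SmoothMet U g) {X Y : VF n} (hX : SmoothSec U X)
    (hY : SmoothSec U Y) : ContDiffOn ℝ ∞ (gV g X Y) U :=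
  contDiffOn_evCo hg hX hY

theorem smoothMet_lieCo (hU : IsOpen U) {X : VF n} (hX : SmoothSec U X) {G : Met n}
    (hG : SmoothMet U G) : SmoothMet U (lieCo X G) := fun i j =>
  ((contDiffOn_dder hU hX (hG i j)).sub
    (ContDiffOn.sum fun s _ => (hG s j).mul (contDiffOn_pd hU s (hX i)))).sub
    (ContDiffOn.sum fun s _ => (hG i s).mul (contDiffOn_pd hU s (hX j)))

/-! ### Directional derivatives -/

theorem fderiv_eq_sum_pd (f : Pt n → ℝ) (y v : Pt n) :
    fderiv ℝ f y v = ∑ s, v s * pd s f y := by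
  conv_lhs => rw [pi_eq_sum_univ' v]
  simp [map_sum, pd]

theorem fderiv_component {X : VF n} (hX : DifferentiableAt ℝ X y) (k : Fin n) (v : Pt n) :
    fderiv ℝ (fun z => X z k) y v = fderiv ℝ X y v k := by
  rw [fderiv_apply hX]
  rfl

theorem dder_eqOn (hU : IsOpen U) (X : VF n) {f h : Pt n → ℝ} (hfh : EqOn f h U) :
    EqOn (dder X f) (dder X h) U := fun y hy => by
  rw [dder, dder, (hfh.eventuallyEq_of_mem (hU.mem_nhds hy)).fderiv_eq]

theorem bracket_eq_lieBracket {X Y : VF n} (hX : DifferentiableAt ℝ X y)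
    (hY : DifferentiableAt ℝ Y y) : bracket X Y y = VectorField.lieBracket ℝ X Y y := by
  funext k
  rw [bracket, fderiv_component hX, fderiv_component hY]
  rfl

theorem dder_bracket {X Y : VF n} {f : Pt n → ℝ} (hf : ContDiffAt ℝ ∞ f y)
    (hX : DifferentiableAt ℝ X y) (hY : DifferentiableAt ℝ Y y) :
    dder (bracket X Y) f y = dder X (dder Y f) y - dder Y (dder X f) y := by
  rw [dder, bracket_eq_lieBracket hX hY]
  refine VectorField.fderiv_apply_lieBracket hf ?_ hY hX
  rw [minSmoothness_of_isRCLikeNormedField]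
  exact WithTop.coe_le_coe.2 le_top

theorem dder_dder_sub_dder_dder {X X' Y Y' : VF n} {f : Pt n → ℝ}
    (hf : DifferentiableAt ℝ (fderiv ℝ f) y) (hY : DifferentiableAt ℝ Y y)
    (hY' : DifferentiableAt ℝ Y' y) (hXX' : X' y = X y) (hYY' : Y' y = Y y) :
    dder X (dder Y f) y - dder X' (dder Y' f) y =
      fderiv ℝ f y (fderiv ℝ (fun z => Y z - Y' z) y (X y)) := by
  have expand (W Z : VF n) (hZ : DifferentiableAt ℝ Z y) : dder W (dder Z f) y =
      fderiv ℝ f y (fderiv ℝ Z y (W y)) + fderiv ℝ (fderiv ℝ f) y (W y) (Z y) := by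
    unfold dder
    rw [fderiv_clm_apply hf hZ]
    rfl
  rw [expand X Y hY, expand X' Y' hY', hXX', hYY', fderiv_fun_sub hY hY']
  simp only [_root_.sub_apply, map_sub]
  ring

/-- The entrywise derivative `D_v G` of a matrix field in the direction `v`. -/
def matDeriv (G : Met n) (y v : Pt n) : Matrix (Fin n) (Fin n) ℝ :=
  Matrix.of fun i j => fderiv ℝ (fun z => G z i j) y v

theorem fderiv_evCo {G : Met n} {α β : OneForm n}
    (hG : ∀ i j, DifferentiableAt ℝ (fun z => G z i j) y) (hα : DifferentiableAt ℝ α y)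
    (hβ : DifferentiableAt ℝ β y) (v : Pt n) :
    fderiv ℝ (evCo G α β) y v = α y ⬝ᵥ matDeriv G y v *ᵥ β y
      + fderiv ℝ α y v ⬝ᵥ G y *ᵥ β y + α y ⬝ᵥ G y *ᵥ fderiv ℝ β y v := by
  have hasDeriv : HasFDerivAt (evCo G α β) (∑ i, ∑ j,
      ((G y i j * α y i) • fderiv ℝ (fun z => β z j) y
        + β y j • (G y i j • fderiv ℝ (fun z => α z i) y
          + α y i • fderiv ℝ (fun z => G z i j) y))) y := by
    refine HasFDerivAt.fun_sum fun i _ => HasFDerivAt.fun_sum fun j _ => ?_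
    exact ((hG i j).hasFDerivAt.mul (differentiableAt_pi.1 hα i).hasFDerivAt).mul
      (differentiableAt_pi.1 hβ j).hasFDerivAt
  rw [hasDeriv.fderiv]
  simp only [← sum_sum_mul_mul_eq_dotProduct_mulVec, ← Finset.sum_add_distrib,
    _root_.sum_apply, _root_.add_apply, _root_.smul_apply, smul_eq_mul, fderiv_component hα,
    fderiv_component hβ, matDeriv, of_apply]
  exact Finset.sum_congr rfl fun i _ => Finset.sum_congr rfl fun j _ => by ring

/-! ### Lie derivatives -/

/-- The Jacobian matrix `∂ₛ Xⁱ` (row `i`, column `s`) of a vector field. -/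
def jacobian (X : VF n) (y : Pt n) : Matrix (Fin n) (Fin n) ℝ :=
  Matrix.of fun i s => pd s (fun z => X z i) y

theorem lieF_apply (X : VF n) {α : OneForm n} (hα : DifferentiableAt ℝ α y) :
    lieF X α y = fderiv ℝ α y (X y) + α y ᵥ* jacobian X y := by
  funext i
  rw [lieF, fderiv_component hα]
  rfl

theorem lieCo_apply (X : VF n) (G : Met n) (y : Pt n) :
    lieCo X G y = matDeriv G y (X y) - jacobian X y * G y - G y * (jacobian X y)ᵀ := by
  ext i j
  simp only [lieCo, jacobian, matDeriv, of_apply, Matrix.sub_apply, mul_apply, transpose_apply,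
    mul_comm]

theorem dder_evCo (X : VF n) {G : Met n} {α β : OneForm n}
    (hG : ∀ i j, DifferentiableAt ℝ (fun z => G z i j) y) (hα : DifferentiableAt ℝ α y)
    (hβ : DifferentiableAt ℝ β y) :
    dder X (evCo G α β) y =
      evCo (lieCo X G) α β y + evCo G (lieF X α) β y + evCo G α (lieF X β) y := by
  rw [dder, fderiv_evCo hG hα hβ]
  simp only [evCo_apply, lieCo_apply, lieF_apply X hα, lieF_apply X hβ, sub_mulVec,
    ← mulVec_mulVec, mulVec_transpose, mulVec_add, dotProduct_sub, dotProduct_add, add_dotProduct,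
    dotProduct_mulVec (α y) (jacobian X y)]
  ring

theorem evCo_lieCo_of_lieF_eq_zero {X : VF n} {G : Met n} {α β : OneForm n}
    (hG : ∀ i j, DifferentiableAt ℝ (fun z => G z i j) y) (hα : DifferentiableAt ℝ α y)
    (hβ : DifferentiableAt ℝ β y) (hXα : lieF X α y = 0) (hXβ : lieF X β y = 0) :
    evCo (lieCo X G) α β y = dder X (evCo G α β) y := by
  simp [dder_evCo X hG hα hβ, evCo_apply G, hXα, hXβ]

theorem evCo_lieCo_lieCo_of_lieF_eq_zero (hU : IsOpen U) {X Y : VF n} {G : Met n}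
    {α β : OneForm n} (hG : SmoothMet U G) (hY : SmoothSec U Y) (hα : SmoothSec U α)
    (hβ : SmoothSec U β) (hy : y ∈ U) (hXα : lieF X α y = 0) (hXβ : lieF X β y = 0)
    (hYα : ∀ z ∈ U, lieF Y α z = 0) (hYβ : ∀ z ∈ U, lieF Y β z = 0) :
    evCo (lieCo X (lieCo Y G)) α β y = dder X (dder Y (evCo G α β)) y := by
  have inner : EqOn (evCo (lieCo Y G) α β) (dder Y (evCo G α β)) U := fun z hz =>
    evCo_lieCo_of_lieF_eq_zero (hG.differentiableAt hU hz) (hα.differentiableAt hU hz)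
      (hβ.differentiableAt hU hz) (hYα z hz) (hYβ z hz)
  rw [evCo_lieCo_of_lieF_eq_zero ((smoothMet_lieCo hU hY hG).differentiableAt hU hy)
    (hα.differentiableAt hU hy) (hβ.differentiableAt hU hy) hXα hXβ, dder_eqOn hU X inner hy]

/-! ### Force and stress -/

theorem force_dotProduct (g : Met n) (α β : OneForm n) (x v : Pt n) :
    force g α β x ⬝ᵥ v = (1/2) * fderiv ℝ (gF g α β) x v := by
  rw [fderiv_eq_sum_pd, Finset.mul_sum]
  refine Finset.sum_congr rfl fun i _ => ?_
  simp only [force, dF]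
  ring

theorem stress_sub_stress {g : Met n} {α β : OneForm n} {Xa Xb : VF n}
    (hα : DifferentiableAt ℝ (sharp g α) x) (hβ : DifferentiableAt ℝ (sharp g β) x)
    (hXa : DifferentiableAt ℝ Xa x) (hXb : DifferentiableAt ℝ Xb x)
    (hXax : Xa x = sharp g α x) (hXbx : Xb x = sharp g β x) :
    stress g α β Xb x - stress g β α Xa x =
      bracket (sharp g α) (sharp g β) x - bracket Xa Xb x := by
  rw [stress, stress, fderiv_fun_sub hα hXa, fderiv_fun_sub hβ hXb, bracket_eq_lieBracket hα hβ,
    bracket_eq_lieBracket hXa hXb, VectorField.lieBracket, VectorField.lieBracket, hXax, hXbx]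
  simp only [_root_.sub_apply]
  abel

theorem lieCo_lieCo_add_force_stress_eq_dder_dder (hU : IsOpen U) {g : Met n}
    (hG : SmoothMet U (ginv g)) {α β : OneForm n} (hα : SmoothSec U α) (hβ : SmoothSec U β)
    (hx : x ∈ U) {Xa Xb : VF n} (hXa : SmoothSec U Xa) (hXb : SmoothSec U Xb)
    (hXax : Xa x = sharp g α x) (hXbx : Xb x = sharp g β x) (haa : lieF Xa α x = 0)
    (hab : ∀ y ∈ U, lieF Xa β y = 0) (hba : ∀ y ∈ U, lieF Xb α y = 0)
    (hbb : ∀ y ∈ U, lieF Xb β y = 0) (hbracket : bracket Xa Xb x = 0) :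
    (1/2) * (evCo (lieCo Xa (lieCo Xa (ginv g))) β β x
          - 2 * evCo (lieCo Xa (lieCo Xb (ginv g))) α β x
          + evCo (lieCo Xb (lieCo Xb (ginv g))) α α x)
        + (force g α α x ⬝ᵥ stress g β β Xb x + force g β β x ⬝ᵥ stress g α α Xa x
          - force g α β x ⬝ᵥ (stress g α β Xb x + stress g β α Xa x)) =
      (1/2) * (dder (sharp g α) (dder (sharp g α) (gF g β β)) x
        - dder (sharp g α) (dder (sharp g β) (gF g α β)) x
        - dder (sharp g β) (dder (sharp g α) (gF g α β)) x
        + dder (sharp g β) (dder (sharp g β) (gF g α α)) x) := by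
  have hA := (smoothSec_sharp hG hα).differentiableAt hU hx
  have hB := (smoothSec_sharp hG hβ).differentiableAt hU hx
  have hXa' := hXa.differentiableAt hU hx
  have hXb' := hXb.differentiableAt hU hx
  have contDiffAt_gF {θ η : OneForm n} (hθ : SmoothSec U θ) (hη : SmoothSec U η) :
      ContDiffAt ℝ ∞ (gF g θ η) x := (contDiffOn_evCo hG hθ hη).contDiffAt (hU.mem_nhds hx)
  have differentiableAt_fderiv_gF {θ η : OneForm n} (hθ : SmoothSec U θ) (hη : SmoothSec U η) :
      DifferentiableAt ℝ (fderiv ℝ (gF g θ η)) x :=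
    ((contDiffAt_gF hθ hη).fderiv_right (m := ∞) (by simp)).differentiableAt (by simp)
  have bracket_gF : fderiv ℝ (gF g α β) x (stress g α β Xb x - stress g β α Xa x) =
      dder (sharp g α) (dder (sharp g β) (gF g α β)) x
        - dder (sharp g β) (dder (sharp g α) (gF g α β)) x := by
    rw [stress_sub_stress hA hB hXa' hXb' hXax hXbx, hbracket, sub_zero]
    exact dder_bracket (contDiffAt_gF hα hβ) hA hB
  rw [map_sub] at bracket_gF
  have defect_ββ : _ = fderiv ℝ (gF g β β) x (stress g α α Xa x) :=
    dder_dder_sub_dder_dder (differentiableAt_fderiv_gF hβ hβ) hA hXa' hXax hXax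
  have defect_αβ : _ = fderiv ℝ (gF g α β) x (stress g α β Xb x) :=
    dder_dder_sub_dder_dder (differentiableAt_fderiv_gF hα hβ) hB hXb' hXax hXbx
  have defect_αα : _ = fderiv ℝ (gF g α α) x (stress g β β Xb x) :=
    dder_dder_sub_dder_dder (differentiableAt_fderiv_gF hα hα) hB hXb' hXbx hXbx
  simp only [force_dotProduct, map_add,
    evCo_lieCo_lieCo_of_lieF_eq_zero hU hG hXa hβ hβ hx (hab x hx) (hab x hx) hab hab,
    evCo_lieCo_lieCo_of_lieF_eq_zero hU hG hXb hα hβ hx haa (hab x hx) hba hbb,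
    evCo_lieCo_lieCo_of_lieF_eq_zero hU hG hXb hα hα hx (hba x hx) (hba x hx) hba hba]
  change (1/2) * (dder Xa (dder Xa (gF g β β)) x - 2 * dder Xa (dder Xb (gF g α β)) x
    + dder Xb (dder Xb (gF g α α)) x) + _ = _
  linarith

/-! ### The Levi-Civita connection -/

/-- `g` is a smooth pseudo-Riemannian metric on `U`: symmetric and nondegenerate, of any signature,
with nondegeneracy encoded as invertibility of the determinant. -/
structure IsPseudoRiemannOn (U : Set (Pt n)) (g : Met n) : Prop where
  smooth : SmoothMet U g
  isSymm : ∀ y ∈ U, (g y).IsSymm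
  isUnit_det : ∀ y ∈ U, IsUnit (g y).det

theorem IsRiemannOn.isPseudoRiemannOn {g : Met n} (hg : IsRiemannOn U g) :
    IsPseudoRiemannOn U g :=
  ⟨hg.1, fun y hy => (hg.2 y hy).1, fun y hy => (hg.2 y hy).2.det_pos.ne'.isUnit⟩

/-- The matrix `v ↦ Γ(u, v)` of the connection form in the direction `u`, so that
`∇_X Y = D_X Y + Γ(X, Y)`. -/
def connMatrix (g : Met n) (y u : Pt n) : Matrix (Fin n) (Fin n) ℝ :=
  Matrix.of fun k j => ∑ i, chr g k i j y * u i

theorem covV_apply {g : Met n} (X : VF n) {Y : VF n} (hY : DifferentiableAt ℝ Y y) :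
    covV g X Y y = fderiv ℝ Y y (X y) + connMatrix g y (X y) *ᵥ Y y := by
  funext k
  simp only [covV, fderiv_component hY, Pi.add_apply, connMatrix, mulVec, dotProduct, of_apply,
    Finset.sum_mul]
  rw [Finset.sum_comm]

namespace IsPseudoRiemannOn

variable {g : Met n}

theorem mono {V : Set (Pt n)} (hg : IsPseudoRiemannOn U g) (hVU : V ⊆ U) :
    IsPseudoRiemannOn V g :=
  ⟨fun i j => (hg.smooth i j).mono hVU, fun y hy => hg.isSymm y (hVU hy),
    fun y hy => hg.isUnit_det y (hVU hy)⟩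

theorem smoothMet_ginv (hg : IsPseudoRiemannOn U g) : SmoothMet U (ginv g) :=
  RG.smoothMet_ginv hg.smooth hg.isUnit_det

theorem dotProduct_mulVec_comm (hg : IsPseudoRiemannOn U g) (hy : y ∈ U) (u v : Pt n) :
    u ⬝ᵥ g y *ᵥ v = v ⬝ᵥ g y *ᵥ u := by
  rw [← dotProduct_transpose_mulVec, (hg.isSymm y hy).eq]

theorem gV_comm (hg : IsPseudoRiemannOn U g) (hy : y ∈ U) (X Y : VF n) :
    gV g X Y y = gV g Y X y := by
  rw [gV_apply, gV_apply, hg.dotProduct_mulVec_comm hy]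

theorem gF_eqOn_gV_sharp (hg : IsPseudoRiemannOn U g) (α β : OneForm n) :
    EqOn (gF g α β) (gV g (sharp g α) (sharp g β)) U := fun y hy => by
  rw [hg.gV_comm hy, gV_sharp_left (hg.isUnit_det y hy), gF_apply_eq_sharp_dotProduct,
    dotProduct_comm]

theorem pd_comm (hU : IsOpen U) (hg : IsPseudoRiemannOn U g) (hy : y ∈ U) (s i j : Fin n) :
    pd s (fun z => g z i j) y = pd s (fun z => g z j i) y := by
  have hsymm : EqOn (fun z => g z i j) (fun z => g z j i) U := fun z hz =>
    (hg.isSymm z hz).apply j i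
  rw [pd, pd, (hsymm.eventuallyEq_of_mem (hU.mem_nhds hy)).fderiv_eq]

theorem chr_comm (hU : IsOpen U) (hg : IsPseudoRiemannOn U g) (hy : y ∈ U) (k i j : Fin n) :
    chr g k i j y = chr g k j i y := by
  unfold chr
  simp only [hg.pd_comm hU hy _ i j, add_comm (pd i _ y)]

theorem smooth_chr (hU : IsOpen U) (hg : IsPseudoRiemannOn U g) (k i j : Fin n) :
    ContDiffOn ℝ ∞ (chr g k i j) U :=
  contDiffOn_const.mul <| ContDiffOn.sum fun l _ => (hg.smoothMet_ginv k l).mul <|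
    ((contDiffOn_pd hU i (hg.smooth j l)).add (contDiffOn_pd hU j (hg.smooth i l))).sub
      (contDiffOn_pd hU l (hg.smooth i j))

theorem smoothSec_covV (hU : IsOpen U) (hg : IsPseudoRiemannOn U g) {X Y : VF n}
    (hX : SmoothSec U X) (hY : SmoothSec U Y) : SmoothSec U (covV g X Y) := fun k =>
  (contDiffOn_dder hU hX (hY k)).add <| ContDiffOn.sum fun i _ => ContDiffOn.sum fun j _ =>
    ((hg.smooth_chr hU k i j).mul (hX i)).mul (hY j)

theorem connMatrix_mulVec_comm (hU : IsOpen U) (hg : IsPseudoRiemannOn U g) (hy : y ∈ U)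
    (u v : Pt n) : connMatrix g y u *ᵥ v = connMatrix g y v *ᵥ u := by
  funext k
  simp only [connMatrix, mulVec, dotProduct, of_apply, Finset.sum_mul]
  rw [Finset.sum_comm]
  refine Finset.sum_congr rfl fun i _ => Finset.sum_congr rfl fun j _ => ?_
  rw [hg.chr_comm hU hy]
  ring

theorem sum_mul_chr (hg : IsPseudoRiemannOn U g) (hy : y ∈ U) (m i j : Fin n) :
    ∑ k, g y m k * chr g k i j y = (1/2) * (pd i (fun z => g z j m) y
      + pd j (fun z => g z i m) y - pd m (fun z => g z i j) y) := by
  have lower_raise (c : Fin n → ℝ) : g y *ᵥ ((1/2 : ℝ) • (g y)⁻¹ *ᵥ c) = (1/2 : ℝ) • c := by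
    rw [mulVec_smul, mulVec_mulVec, mul_nonsing_inv _ (hg.isUnit_det y hy), one_mulVec]
  exact congrFun (lower_raise fun l => pd i (fun z => g z j l) y
    + pd j (fun z => g z i l) y - pd l (fun z => g z i j) y) m

theorem mul_connMatrix_apply (hg : IsPseudoRiemannOn U g) (hy : y ∈ U) (u : Pt n)
    (m j : Fin n) :
    (g y * connMatrix g y u) m j = ∑ i, u i * ((1/2) * (pd i (fun z => g z j m) y
      + pd j (fun z => g z i m) y - pd m (fun z => g z i j) y)) := by
  simp only [← hg.sum_mul_chr hy, mul_apply, connMatrix, of_apply, Finset.mul_sum]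
  rw [Finset.sum_comm]
  exact Finset.sum_congr rfl fun i _ => Finset.sum_congr rfl fun k _ => by ring

theorem matDeriv_eq_add (hU : IsOpen U) (hg : IsPseudoRiemannOn U g) (hy : y ∈ U) (u : Pt n) :
    matDeriv g y u = g y * connMatrix g y u + (g y * connMatrix g y u)ᵀ := by
  ext i j
  rw [Matrix.add_apply, transpose_apply, hg.mul_connMatrix_apply hy, hg.mul_connMatrix_apply hy,
    ← Finset.sum_add_distrib, matDeriv, of_apply, fderiv_eq_sum_pd]
  refine Finset.sum_congr rfl fun s _ => ?_
  rw [hg.pd_comm hU hy s j i, hg.pd_comm hU hy i s j, hg.pd_comm hU hy j s i]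
  ring

theorem bracket_eq_covV_sub_covV (hU : IsOpen U) (hg : IsPseudoRiemannOn U g) (hy : y ∈ U)
    {X Y : VF n} (hX : DifferentiableAt ℝ X y) (hY : DifferentiableAt ℝ Y y) :
    bracket X Y y = covV g X Y y - covV g Y X y := by
  rw [covV_apply X hY, covV_apply Y hX, bracket_eq_lieBracket hX hY, VectorField.lieBracket,
    hg.connMatrix_mulVec_comm hU hy]
  abel

theorem dder_gV (hU : IsOpen U) (hg : IsPseudoRiemannOn U g) (hy : y ∈ U) (Z : VF n) {X Y : VF n}
    (hX : DifferentiableAt ℝ X y) (hY : DifferentiableAt ℝ Y y) :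
    dder Z (gV g X Y) y = gV g (covV g Z X) Y y + gV g X (covV g Z Y) y := by
  change fderiv ℝ (evCo g X Y) y (Z y) = _
  rw [fderiv_evCo (hg.smooth.differentiableAt hU hy) hX hY, hg.matDeriv_eq_add hU hy, gV_apply,
    gV_apply, covV_apply Z hX, covV_apply Z hY]
  simp only [add_mulVec, mulVec_add, dotProduct_add, add_dotProduct, dotProduct_transpose_mulVec,
    ← mulVec_mulVec, hg.dotProduct_mulVec_comm hy (connMatrix g y (Z y) *ᵥ X y)]
  ring

theorem gV_Rcurv (hU : IsOpen U) (hg : IsPseudoRiemannOn U g) (hy : y ∈ U) {X Y Z W : VF n}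
    (hX : SmoothSec U X) (hY : SmoothSec U Y) (hZ : SmoothSec U Z) (hW : SmoothSec U W) :
    gV g (Rcurv g X Y Z) W y =
      dder X (gV g (covV g Y Z) W) y - gV g (covV g Y Z) (covV g X W) y
      - (dder Y (gV g (covV g X Z) W) y - gV g (covV g X Z) (covV g Y W) y)
      - gV g (covV g (bracket X Y) Z) W y := by
  have hW' := hW.differentiableAt hU hy
  rw [hg.dder_gV hU hy X ((hg.smoothSec_covV hU hY hZ).differentiableAt hU hy) hW',
    hg.dder_gV hU hy Y ((hg.smoothSec_covV hU hX hZ).differentiableAt hU hy) hW']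
  simp only [Rcurv, gV_apply, Pi.sub_apply, sub_dotProduct]
  ring

end IsPseudoRiemannOn

/-! ### Irrotational fields -/

/-- A vector field `X` is irrotational if its covariant derivative `∇X` is self-adjoint, i.e. if
the 1-form `X♭` is closed. This is the case of `α♯` for a closed form `α`. -/
def IsIrrotationalOn (U : Set (Pt n)) (g : Met n) (X : VF n) : Prop :=
  ∀ y ∈ U, ∀ Y Z : VF n, gV g (covV g Y X) Z y = gV g (covV g Z X) Y y

theorem IsClosedOn.fderiv_dotProduct_comm {α : OneForm n} (hα : IsClosedOn U α) (hy : y ∈ U)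
    (hdα : DifferentiableAt ℝ α y) (u v : Pt n) :
    fderiv ℝ α y u ⬝ᵥ v = fderiv ℝ α y v ⬝ᵥ u := by
  simp only [dotProduct, ← fderiv_component hdα, fderiv_eq_sum_pd _ y, Finset.sum_mul]
  rw [Finset.sum_comm]
  refine Finset.sum_congr rfl fun i _ => Finset.sum_congr rfl fun j _ => ?_
  rw [hα y hy]
  ring

namespace IsPseudoRiemannOn

variable {g : Met n}

theorem gV_covV_sharp (hU : IsOpen U) (hg : IsPseudoRiemannOn U g) (hy : y ∈ U) {α : OneForm n}
    (hα : SmoothSec U α) (X Y : VF n) :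
    gV g (covV g X (sharp g α)) Y y =
      fderiv ℝ α y (X y) ⬝ᵥ Y y - α y ⬝ᵥ connMatrix g y (X y) *ᵥ Y y := by
  have hA := (smoothSec_sharp hg.smoothMet_ginv hα).differentiableAt hU hy
  have hdα := hα.differentiableAt hU hy
  -- Only `Y y` matters, so `Y` may be frozen to a constant field, which is differentiable.
  have pairing : EqOn (gV g (sharp g α) fun _ => Y y) (fun z => ∑ j, α z j * Y y j) U :=
    fun z hz => gV_sharp_left (hg.isUnit_det z hz) _ _
  have dder_pairing : dder X (fun z => ∑ j, α z j * Y y j) y = fderiv ℝ α y (X y) ⬝ᵥ Y y := by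
    rw [dder, fderiv_fun_sum fun j _ => (differentiableAt_pi.1 hdα j).mul_const _]
    simp only [_root_.sum_apply, dotProduct]
    refine Finset.sum_congr rfl fun j _ => ?_
    rw [fderiv_mul_const (differentiableAt_pi.1 hdα j), ← fderiv_component hdα, mul_comm]
    rfl
  have leibniz := hg.dder_gV hU hy X hA (differentiableAt_const (Y y))
  rw [dder_eqOn hU X pairing hy, dder_pairing, gV_sharp_left (hg.isUnit_det y hy),
    covV_apply X (differentiableAt_const _)] at leibniz
  simp only [fderiv_fun_const, Pi.zero_apply, _root_.zero_apply, zero_add] at leibniz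
  rw [leibniz, gV_apply, gV_apply, add_sub_cancel_right]

theorem isIrrotationalOn_sharp (hU : IsOpen U) (hg : IsPseudoRiemannOn U g) {α : OneForm n}
    (hα : SmoothSec U α) (hcα : IsClosedOn U α) : IsIrrotationalOn U g (sharp g α) :=
  fun y hy Y Z => by
  rw [hg.gV_covV_sharp hU hy hα, hg.gV_covV_sharp hU hy hα, hg.connMatrix_mulVec_comm hU hy,
    hcα.fderiv_dotProduct_comm hy (hα.differentiableAt hU hy)]

theorem dder_gV_of_isIrrotationalOn (hU : IsOpen U) (hg : IsPseudoRiemannOn U g) (hy : y ∈ U)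
    (Z : VF n) {X Y : VF n} (hX : SmoothSec U X) (hY : SmoothSec U Y)
    (hirrX : IsIrrotationalOn U g X) (hirrY : IsIrrotationalOn U g Y) :
    dder Z (gV g X Y) y = gV g (covV g X Y + covV g Y X) Z y := by
  rw [hg.dder_gV hU hy Z (hX.differentiableAt hU hy) (hY.differentiableAt hU hy),
    hg.gV_comm hy X, hirrX y hy Z, hirrY y hy Z, gV_apply g (_ + _), Pi.add_apply, add_dotProduct,
    ← gV_apply, ← gV_apply, add_comm]

theorem sharp_force (hU : IsOpen U) (hg : IsPseudoRiemannOn U g) (hy : y ∈ U) {α β : OneForm n}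
    (hα : SmoothSec U α) (hβ : SmoothSec U β) (hcα : IsClosedOn U α) (hcβ : IsClosedOn U β) :
    sharp g (force g α β) y = (1/2 : ℝ) •
      (covV g (sharp g α) (sharp g β) y + covV g (sharp g β) (sharp g α) y) := by
  refine sharp_eq_of_forall_dotProduct_eq (hg.isUnit_det y hy) fun v => ?_
  have gradient := hg.dder_gV_of_isIrrotationalOn hU hy (fun _ => v)
    (smoothSec_sharp hg.smoothMet_ginv hα) (smoothSec_sharp hg.smoothMet_ginv hβ)
    (hg.isIrrotationalOn_sharp hU hα hcα) (hg.isIrrotationalOn_sharp hU hβ hcβ)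
  rw [← dder_eqOn hU _ (hg.gF_eqOn_gV_sharp α β) hy, gV_apply] at gradient
  rw [force_dotProduct, smul_dotProduct, smul_eq_mul]
  exact congrArg _ gradient

theorem gV_covV_self_of_isIrrotationalOn (hU : IsOpen U) (hg : IsPseudoRiemannOn U g) (hy : y ∈ U)
    {X : VF n} (hX : SmoothSec U X) (hirrX : IsIrrotationalOn U g X) (Z : VF n) :
    gV g (covV g X X) Z y = (1/2) * dder Z (gV g X X) y := by
  have hX' := hX.differentiableAt hU hy
  rw [hg.dder_gV hU hy Z hX' hX', hg.gV_comm hy X, hirrX y hy X Z]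
  ring

theorem gV_covV_of_isIrrotationalOn (hU : IsOpen U) (hg : IsPseudoRiemannOn U g) (hy : y ∈ U)
    {X Y : VF n} (hX : SmoothSec U X) (hY : SmoothSec U Y) (hirrX : IsIrrotationalOn U g X) :
    gV g (covV g X Y) X y = dder X (gV g X Y) y - (1/2) * dder Y (gV g X X) y := by
  rw [← hg.gV_covV_self_of_isIrrotationalOn hU hy hX hirrX,
    hg.dder_gV hU hy X (hX.differentiableAt hU hy) (hY.differentiableAt hU hy), hg.gV_comm hy X]
  ring

theorem gV_Rcurv_of_isIrrotationalOn (hU : IsOpen U) (hg : IsPseudoRiemannOn U g) (hx : x ∈ U)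
    {A B : VF n} (hA : SmoothSec U A) (hB : SmoothSec U B) (hirrA : IsIrrotationalOn U g A)
    (hirrB : IsIrrotationalOn U g B) :
    gV g (Rcurv g A B B) A x =
      (1/2) * (dder A (dder A (gV g B B)) x - dder A (dder B (gV g A B)) x
        - dder B (dder A (gV g A B)) x + dder B (dder B (gV g A A)) x)
      + (gV g ((1/2 : ℝ) • (covV g A B + covV g B A)) ((1/2 : ℝ) • (covV g A B + covV g B A)) x
        - gV g (covV g A A) (covV g B B) x)
      - (3/4) * gV g (bracket A B) (bracket A B) x := by
  have hA' := hA.differentiableAt hU hx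
  have hB' := hB.differentiableAt hU hx
  have dder_covV_BB : dder A (gV g (covV g B B) A) x =
      (1/2) * dder A (dder A (gV g B B)) x := by
    have hAf := differentiableAt_of_contDiffOn hU
      (contDiffOn_dder hU hA (contDiffOn_gV hg.smooth hB hB)) hx
    rw [dder_eqOn hU A (fun y hy => hg.gV_covV_self_of_isIrrotationalOn hU hy hB hirrB A) hx, dder,
      fderiv_const_mul hAf]
    rfl
  have dder_covV_AB : dder B (gV g (covV g A B) A) x =
      dder B (dder A (gV g A B)) x - (1/2) * dder B (dder B (gV g A A)) x := by
    have hAf := differentiableAt_of_contDiffOn hU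
      (contDiffOn_dder hU hA (contDiffOn_gV hg.smooth hA hB)) hx
    have hBf := differentiableAt_of_contDiffOn hU
      (contDiffOn_dder hU hB (contDiffOn_gV hg.smooth hA hA)) hx
    rw [dder_eqOn hU B (fun y hy => hg.gV_covV_of_isIrrotationalOn hU hy hA hB hirrA) hx, dder,
      fderiv_fun_sub hAf (hBf.const_mul _), fderiv_const_mul hBf]
    rfl
  have commutator : gV g (covV g A B + covV g B A) (bracket A B) x =
      dder A (dder B (gV g A B)) x - dder B (dder A (gV g A B)) x := by
    rw [← hg.dder_gV_of_isIrrotationalOn hU hx _ hA hB hirrA hirrB]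
    exact dder_bracket ((contDiffOn_gV hg.smooth hA hB).contDiffAt (hU.mem_nhds hx)) hA' hB'
  rw [hg.gV_Rcurv hU hx hA hB hB hA, dder_covV_BB, dder_covV_AB, hirrB x hx (bracket A B) A]
  simp only [gV_apply, hg.bracket_eq_covV_sub_covV hU hx hA' hB', Pi.add_apply, Pi.smul_apply,
    mulVec_add, mulVec_sub, mulVec_smul, dotProduct_add, dotProduct_sub, dotProduct_smul,
    add_dotProduct, sub_dotProduct, smul_dotProduct, smul_eq_mul] at commutator ⊢
  rw [hg.dotProduct_mulVec_comm hx (covV g B A x) (covV g A B x)] at commutator ⊢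
  rw [hg.dotProduct_mulVec_comm hx (covV g B B x)]
  linarith

theorem gV_Rcurv_sharp (hU : IsOpen U) (hg : IsPseudoRiemannOn U g) (hx : x ∈ U)
    {α β : OneForm n} (hα : SmoothSec U α) (hβ : SmoothSec U β) (hcα : IsClosedOn U α)
    (hcβ : IsClosedOn U β) :
    gV g (Rcurv g (sharp g α) (sharp g β) (sharp g β)) (sharp g α) x =
      (1/2) * (dder (sharp g α) (dder (sharp g α) (gF g β β)) x
        - dder (sharp g α) (dder (sharp g β) (gF g α β)) x
        - dder (sharp g β) (dder (sharp g α) (gF g α β)) x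
        + dder (sharp g β) (dder (sharp g β) (gF g α α)) x)
      + (gF g (force g α β) (force g α β) x - gF g (force g α α) (force g β β) x)
      - (3/4) * gV g (bracket (sharp g α) (sharp g β)) (bracket (sharp g α) (sharp g β)) x := by
  have transfer (X Y : VF n) (θ η : OneForm n) : dder X (dder Y (gF g θ η)) x =
      dder X (dder Y (gV g (sharp g θ) (sharp g η))) x :=
    dder_eqOn hU X (dder_eqOn hU Y (hg.gF_eqOn_gV_sharp θ η)) hx
  have sharp_force_self {θ : OneForm n} (hθ : SmoothSec U θ) (hcθ : IsClosedOn U θ) :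
      sharp g (force g θ θ) x = covV g (sharp g θ) (sharp g θ) x := by
    rw [hg.sharp_force hU hx hθ hθ hcθ hcθ, ← two_smul ℝ, smul_smul]
    norm_num
  rw [hg.gV_Rcurv_of_isIrrotationalOn hU hx (smoothSec_sharp hg.smoothMet_ginv hα)
    (smoothSec_sharp hg.smoothMet_ginv hβ) (hg.isIrrotationalOn_sharp hU hα hcα)
    (hg.isIrrotationalOn_sharp hU hβ hcβ)]
  simp only [transfer, hg.gF_eqOn_gV_sharp _ _ hx, gV_apply, sharp_force_self hα hcα,
    sharp_force_self hβ hcβ, hg.sharp_force hU hx hα hβ hcα hcβ, Pi.smul_apply, Pi.add_apply]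

end IsPseudoRiemannOn

end RG

theorem mario_formula_force_stress_general {n : ℕ} {U : Set (Pt n)} (hU : IsOpen U) {g : Met n}
    (hg : IsPseudoRiemannOn U g) {α β : OneForm n} (hα : SmoothSec U α) (hβ : SmoothSec U β)
    (hcα : IsClosedOn U α) (hcβ : IsClosedOn U β) {x : Pt n} (hx : x ∈ U) {Xa Xb : VF n}
    (hXa : SmoothSec U Xa) (hXb : SmoothSec U Xb)
    (hXax : Xa x = sharp g α x) (hXbx : Xb x = sharp g β x) (haa : lieF Xa α x = 0)
    (hab : ∀ y ∈ U, lieF Xa β y = 0) (hba : ∀ y ∈ U, lieF Xb α y = 0)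
    (hbb : ∀ y ∈ U, lieF Xb β y = 0) (hbracket : bracket Xa Xb x = 0) :
    gV g (Rcurv g (sharp g α) (sharp g β) (sharp g β)) (sharp g α) x =
      (1/2) * ( evCo (lieCo Xa (lieCo Xa (ginv g))) β β x
                - 2 * evCo (lieCo Xa (lieCo Xb (ginv g))) α β x
                + evCo (lieCo Xb (lieCo Xb (ginv g))) α α x )
      + ( (∑ i, force g α α x i * stress g β β Xb x i)
          + (∑ i, force g β β x i * stress g α α Xa x i)
          - (∑ i, force g α β x i * (stress g α β Xb x i + stress g β α Xa x i)) )
      + ( gF g (force g α β) (force g α β) x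
          - gF g (force g α α) (force g β β) x )
      + ( - (3/4) * ∑ i, ∑ j, g x i j * (stress g α β Xb x i - stress g β α Xa x i)
            * (stress g α β Xb x j - stress g β α Xa x j) ) := by
  have hG := hg.smoothMet_ginv
  have stress_sub_eq_bracket : stress g α β Xb x - stress g β α Xa x =
      bracket (sharp g α) (sharp g β) x := by
    rw [stress_sub_stress ((smoothSec_sharp hG hα).differentiableAt hU hx)
      ((smoothSec_sharp hG hβ).differentiableAt hU hx) (hXa.differentiableAt hU hx)
      (hXb.differentiableAt hU hx) hXax hXbx, hbracket, sub_zero]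
  have norm_sq_stress_sub : ∑ i, ∑ j, g x i j * (stress g α β Xb x i - stress g β α Xa x i)
      * (stress g α β Xb x j - stress g β α Xa x j) =
        gV g (bracket (sharp g α) (sharp g β)) (bracket (sharp g α) (sharp g β)) x := by
    simp only [gV, ← stress_sub_eq_bracket, Pi.sub_apply]
  have second_order := lieCo_lieCo_add_force_stress_eq_dder_dder hU hG hα hβ hx hXa hXb hXax hXbx
    haa hab hba hbb hbracket
  simp only [dotProduct, Pi.add_apply] at second_order
  rw [hg.gV_Rcurv_sharp hU hx hα hβ hcα hcβ, norm_sq_stress_sub, ← second_order]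
  ring

/-- **Mario's formula via force and stress**: with `X_α, X_β` locally constant
extensions of `α♯(x)`, `β♯(x)` (conditions (1)–(4)),
`g(R(α♯,β♯)β♯,α♯)(x) = R₁₁ + R₁₂ + R₂ + R₃`. -/
theorem mario_formula_force_stress {n : ℕ} (U : Set (Pt n)) (hU : IsOpen U)
    (g : Met n) (hg : IsRiemannOn U g)
    (α β : OneForm n) (hα : SmoothSec U α) (hβ : SmoothSec U β)
    (hcα : IsClosedOn U α) (hcβ : IsClosedOn U β)
    (x : Pt n) (hx : x ∈ U)
    (Xa Xb : VF n) (V : Set (Pt n)) (hV : IsOpen V) (hxV : x ∈ V) (hVU : V ⊆ U)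
    (hXa : SmoothSec V Xa) (hXb : SmoothSec V Xb)
    (h1a : Xa x = sharp g α x) (h1b : Xb x = sharp g β x)
    (h3aa : ∀ y ∈ V, lieF Xa α y = 0) (h3ab : ∀ y ∈ V, lieF Xa β y = 0)
    (h3ba : ∀ y ∈ V, lieF Xb α y = 0) (h3bb : ∀ y ∈ V, lieF Xb β y = 0)
    (h4 : ∀ y ∈ V, bracket Xa Xb y = 0) :
    gV g (Rcurv g (sharp g α) (sharp g β) (sharp g β)) (sharp g α) x =
      (1/2) * ( evCo (lieCo Xa (lieCo Xa (ginv g))) β β x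
                - 2 * evCo (lieCo Xa (lieCo Xb (ginv g))) α β x
                + evCo (lieCo Xb (lieCo Xb (ginv g))) α α x )
      + ( (∑ i, force g α α x i * stress g β β Xb x i)
          + (∑ i, force g β β x i * stress g α α Xa x i)
          - (∑ i, force g α β x i * (stress g α β Xb x i + stress g β α Xa x i)) )
      + ( gF g (force g α β) (force g α β) x
          - gF g (force g α α) (force g β β) x )
      + ( - (3/4) * ∑ i, ∑ j, g x i j * (stress g α β Xb x i - stress g β α Xa x i)
            * (stress g α β Xb x j - stress g β α Xa x j) ) :=
  mario_formula_force_stress_general hV (hg.isPseudoRiemannOn.mono hVU)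
    (fun i => (hα i).mono hVU) (fun i => (hβ i).mono hVU) (fun y hy => hcα y (hVU hy))
    (fun y hy => hcβ y (hVU hy)) hxV hXa hXb h1a h1b (h3aa x hxV) h3ab h3ba h3bb (h4 x hxV)
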